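/- Completeness of PRK with respect to Kripke semantics: let Γ be a (possibly infinite) set of moded propositions and P a moded proposition; if in every Kripke model for PRK and every world w, (w ⊩ Q for all Q ∈ Γ) implies w ⊩ P, then Γ ⊢ P, i.e., there is a finite subset Δ ⊆ Γ with Δ ⊢ P derivable in PRK. -/

import Mathlib

/-!
If `Γ` does not prove `P`, Lindenbaum's lemma (`exists_primeTheory`) extends `Γ` to a prime theory
not containing `P`. In the canonical model, whose worlds are the prime theories ordered by
inclusion, this is a world forcing `Γ` but not `P` by the truth lemma
(`canonicalModel_forces_iff`).

The crucial point, needed both for Stabilization and for the classical case of the truth lemma, is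
that a set from which `A⁻` leads to `A⊕` already proves `A⊕`, and dually
(`PRK.by_contradiction`). The rule (IC⁺) only yields this for the weaker hypothesis `A⊖`. For
compound `A` the stronger form follows from the rules of the connective. For an atom `α` it holds
because replacing every strong atom in a derivation by its classical counterpart leaves a derivable
judgment (`PRK.weakAtom`): a derivation from `α⁻` becomes one from `α⊖`.

The symmetry between the two signs is exploited through Smullyan's uniform notation: up to
opposites, every compound strong proposition behaves like a conjunction of two classical ones.
-/

/-- Pure propositions: A ::= α | A∧B | A∨B | ¬A -/
inductive PureProp : Type
  | var : ℕ → PureProp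
  | conj : PureProp → PureProp → PureProp
  | disj : PureProp → PureProp → PureProp
  | neg : PureProp → PureProp
  deriving DecidableEq

/-- Moded propositions: A⁺ (sp), A⁻ (sn), A⊕ (cp), A⊖ (cn). -/
inductive MProp : Type
  | sp : PureProp → MProp
  | sn : PureProp → MProp
  | cp : PureProp → MProp
  | cn : PureProp → MProp
  deriving DecidableEq

/-- The opposite P~: flips the sign, keeps the strength. -/
def MProp.opp : MProp → MProp
  | .sp A => .sn A
  | .sn A => .sp A
  | .cp A => .cn A
  | .cn A => .cp A

def MProp.isStrong : MProp → Prop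
  | .sp _ => True
  | .sn _ => True
  | .cp _ => False
  | .cn _ => False

def MProp.isClassical : MProp → Prop
  | .sp _ => False
  | .sn _ => False
  | .cp _ => True
  | .cn _ => True

/-- Derivability in system PRK (natural deduction), Γ a finite set of moded propositions. -/
inductive PRK : Finset MProp → MProp → Prop
  | ax {Γ : Finset MProp} {P : MProp} : P ∈ Γ → PRK Γ P
  | abs {Γ : Finset MProp} {P Q : MProp} :
      P.isStrong → PRK Γ P → PRK Γ P.opp → PRK Γ Q
  | iConjP {Γ A B} : PRK Γ (MProp.cp A) → PRK Γ (MProp.cp B) → PRK Γ (MProp.sp (PureProp.conj A B))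
  | eConjP1 {Γ A B} : PRK Γ (MProp.sp (PureProp.conj A B)) → PRK Γ (MProp.cp A)
  | eConjP2 {Γ A B} : PRK Γ (MProp.sp (PureProp.conj A B)) → PRK Γ (MProp.cp B)
  | iDisjP1 {Γ A B} : PRK Γ (MProp.cp A) → PRK Γ (MProp.sp (PureProp.disj A B))
  | iDisjP2 {Γ A B} : PRK Γ (MProp.cp B) → PRK Γ (MProp.sp (PureProp.disj A B))
  | eDisjP {Γ A B P} : PRK Γ (MProp.sp (PureProp.disj A B)) →
      PRK (insert (MProp.cp A) Γ) P → PRK (insert (MProp.cp B) Γ) P → PRK Γ P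
  | iNegP {Γ A} : PRK Γ (MProp.cn A) → PRK Γ (MProp.sp (PureProp.neg A))
  | eNegP {Γ A} : PRK Γ (MProp.sp (PureProp.neg A)) → PRK Γ (MProp.cn A)
  | icP {Γ A} : PRK (insert (MProp.cn A) Γ) (MProp.sp A) → PRK Γ (MProp.cp A)
  | ecP {Γ A} : PRK Γ (MProp.cp A) → PRK Γ (MProp.cn A) → PRK Γ (MProp.sp A)
  | iDisjN {Γ A B} : PRK Γ (MProp.cn A) → PRK Γ (MProp.cn B) → PRK Γ (MProp.sn (PureProp.disj A B))
  | eDisjN1 {Γ A B} : PRK Γ (MProp.sn (PureProp.disj A B)) → PRK Γ (MProp.cn A)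
  | eDisjN2 {Γ A B} : PRK Γ (MProp.sn (PureProp.disj A B)) → PRK Γ (MProp.cn B)
  | iConjN1 {Γ A B} : PRK Γ (MProp.cn A) → PRK Γ (MProp.sn (PureProp.conj A B))
  | iConjN2 {Γ A B} : PRK Γ (MProp.cn B) → PRK Γ (MProp.sn (PureProp.conj A B))
  | eConjN {Γ A B P} : PRK Γ (MProp.sn (PureProp.conj A B)) →
      PRK (insert (MProp.cn A) Γ) P → PRK (insert (MProp.cn B) Γ) P → PRK Γ P
  | iNegN {Γ A} : PRK Γ (MProp.cp A) → PRK Γ (MProp.sn (PureProp.neg A))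
  | eNegN {Γ A} : PRK Γ (MProp.sn (PureProp.neg A)) → PRK Γ (MProp.cp A)
  | icN {Γ A} : PRK (insert (MProp.cp A) Γ) (MProp.sn A) → PRK Γ (MProp.cn A)
  | ecN {Γ A} : PRK Γ (MProp.cn A) → PRK Γ (MProp.cp A) → PRK Γ (MProp.sn A)

/-- A Kripke model for PRK. -/
structure KripkeModel (W : Type) where
  le : W → W → Prop
  le_refl : ∀ w, le w w
  le_trans : ∀ {a b c}, le a b → le b c → le a c
  le_antisymm : ∀ {a b}, le a b → le b a → a = b
  Vp : W → ℕ → Prop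
  Vn : W → ℕ → Prop
  monoP : ∀ {w w'}, le w w' → ∀ {a}, Vp w a → Vp w' a
  monoN : ∀ {w w'}, le w w' → ∀ {a}, Vn w a → Vn w' a
  stab : ∀ w a, ∃ w', le w w' ∧ Xor' (Vp w' a) (Vn w' a)

def PureProp.size : PureProp → ℕ
  | .var _ => 1
  | .conj A B => 1 + A.size + B.size
  | .disj A B => 1 + A.size + B.size
  | .neg A => 1 + A.size

def MProp.meas : MProp → ℕ
  | .sp A => 2 * A.size
  | .sn A => 2 * A.size
  | .cp A => 2 * A.size + 1
  | .cn A => 2 * A.size + 1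

/-- The forcing relation w ⊩ P, defined by recursion on the measure. -/
def Forces {W : Type} (M : KripkeModel W) : W → MProp → Prop
  | w, .sp (.var a) => M.Vp w a
  | w, .sn (.var a) => M.Vn w a
  | w, .sp (.conj A B) => Forces M w (.cp A) ∧ Forces M w (.cp B)
  | w, .sn (.conj A B) => Forces M w (.cn A) ∨ Forces M w (.cn B)
  | w, .sp (.disj A B) => Forces M w (.cp A) ∨ Forces M w (.cp B)
  | w, .sn (.disj A B) => Forces M w (.cn A) ∧ Forces M w (.cn B)
  | w, .sp (.neg A) => Forces M w (.cn A)
  | w, .sn (.neg A) => Forces M w (.cp A)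
  | w, .cp A => ∀ w', M.le w w' → ¬ Forces M w' (.sn A)
  | w, .cn A => ∀ w', M.le w w' → ¬ Forces M w' (.sp A)
termination_by w P => P.meas
decreasing_by all_goals simp [MProp.meas, PureProp.size] <;> omega

/-- Derivability from a possibly infinite set of moded propositions. -/
def SDeriv (Γ : Set MProp) (P : MProp) : Prop :=
  ∃ Δ : Finset MProp, ↑Δ ⊆ Γ ∧ PRK Δ P

/-- Consistency of a possibly infinite set of moded propositions. -/
def SetConsistent (Γ : Set MProp) : Prop := ∃ P, ¬ SDeriv Γ P

/-! ### Uniform notation -/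

namespace MProp

/-- The classical counterpart of a moded proposition: `A⊕` for `A⁺` and `A⊖` for `A⁻`. Classical
propositions are their own counterparts. -/
def classical : MProp → MProp
  | sp A => cp A
  | sn A => cn A
  | P => P

@[simp]
theorem opp_opp (P : MProp) : P.opp.opp = P := by
  cases P <;> rfl

theorem classical_opp (P : MProp) : P.opp.classical = P.classical.opp := by
  cases P <;> rfl

theorem isClassical_classical (P : MProp) : P.classical.isClassical := by
  cases P <;> trivial

theorem classical_eq_self {P : MProp} (hP : P.isClassical) : P.classical = P := by
  cases P <;> first | rfl | exact hP.elim

/-- `Conjunctive P X Y` says that the strong proposition `P` is the conjunction of the classical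
propositions `X` and `Y`, in the sense of Smullyan's uniform notation. Then `P.opp` is the
disjunction of `X.opp` and `Y.opp`, and every compound strong proposition is of one of these two
forms. A negation counts as a conjunction of two copies of its only component. -/
inductive Conjunctive : MProp → MProp → MProp → Prop
  | conj (A B : PureProp) : Conjunctive (sp (A.conj B)) (cp A) (cp B)
  | disj (A B : PureProp) : Conjunctive (sn (A.disj B)) (cn A) (cn B)
  | negP (A : PureProp) : Conjunctive (sp A.neg) (cn A) (cn A)
  | negN (A : PureProp) : Conjunctive (sn A.neg) (cp A) (cp A)

theorem Conjunctive.isClassical {P X Y : MProp} (h : Conjunctive P X Y) :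
    X.isClassical ∧ Y.isClassical := by
  cases h <;> exact ⟨trivial, trivial⟩

/-- The case `classical` assumes the motive for the opposite of a strong proposition because the
forcing of `A⊕` refers to that of `A⁻`. -/
@[elab_as_elim]
theorem uniform_induction {motive : MProp → Prop}
    (atomP : ∀ a, motive (sp (.var a)))
    (atomN : ∀ a, motive (sn (.var a)))
    (conj : ∀ P X Y, Conjunctive P X Y → motive X → motive Y → motive P)
    (disj : ∀ P X Y, Conjunctive P X Y → motive X.opp → motive Y.opp → motive P.opp)
    (classical : ∀ P : MProp, P.isStrong → motive P.opp → motive P.classical)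
    (P : MProp) : motive P := by
  have strong (A : PureProp) : motive (sp A) ∧ motive (sn A) := by
    have cp_of_sn {A} : motive (sn A) → motive (cp A) := classical (sp A) trivial
    have cn_of_sp {A} : motive (sp A) → motive (cn A) := classical (sn A) trivial
    induction A with
    | var a => exact ⟨atomP a, atomN a⟩
    | conj A B ihA ihB =>
      exact ⟨conj _ _ _ (.conj A B) (cp_of_sn ihA.2) (cp_of_sn ihB.2),
        disj _ _ _ (.conj A B) (cn_of_sp ihA.1) (cn_of_sp ihB.1)⟩
    | disj A B ihA ihB =>
      exact ⟨disj _ _ _ (.disj A B) (cp_of_sn ihA.2) (cp_of_sn ihB.2),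
        conj _ _ _ (.disj A B) (cn_of_sp ihA.1) (cn_of_sp ihB.1)⟩
    | neg A ih =>
      exact ⟨conj _ _ _ (.negP A) (cn_of_sp ih.1) (cn_of_sp ih.1),
        conj _ _ _ (.negN A) (cp_of_sn ih.2) (cp_of_sn ih.2)⟩
  cases P with
  | sp A => exact (strong A).1
  | sn A => exact (strong A).2
  | cp A => exact classical (sp A) trivial (strong A).2
  | cn A => exact classical (sn A) trivial (strong A).1

end MProp

open MProp

/-! ### Derivations -/

namespace PRK

variable {Γ Δ : Finset MProp} {P Q R X Y : MProp}

theorem ic (h : PRK (insert P.opp.classical Γ) P) : PRK Γ P.classical := by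
  cases P with
  | sp A => exact .icP h
  | sn A => exact .icN h
  | cp A => exact .icP (.ecP h (.ax (Finset.mem_insert_self _ _)))
  | cn A => exact .icN (.ecN h (.ax (Finset.mem_insert_self _ _)))

theorem ec (h : PRK Γ P.classical) (h' : PRK Γ P.opp.classical) : PRK Γ P := by
  cases P
  exacts [.ecP h h', .ecN h h', h, h]

protected theorem absurd (h : PRK Γ P) (h' : PRK Γ P.opp) : PRK Γ Q := by
  cases P with
  | sp A => exact .abs (P := .sp A) trivial h h'
  | sn A => exact .abs (P := .sn A) trivial h h'
  | cp A => exact .abs (P := .sp A) trivial (.ecP h h') (.ecN h' h)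
  | cn A => exact .abs (P := .sp A) trivial (.ecP h' h) (.ecN h h')

theorem conj_intro (h : Conjunctive P X Y) (hX : PRK Γ X) (hY : PRK Γ Y) : PRK Γ P := by
  cases h
  exacts [.iConjP hX hY, .iDisjN hX hY, .iNegP hX, .iNegN hX]

theorem conj_left (h : Conjunctive P X Y) (hP : PRK Γ P) : PRK Γ X := by
  cases h
  exacts [.eConjP1 hP, .eDisjN1 hP, .eNegP hP, .eNegN hP]

theorem conj_right (h : Conjunctive P X Y) (hP : PRK Γ P) : PRK Γ Y := by
  cases h
  exacts [.eConjP2 hP, .eDisjN2 hP, .eNegP hP, .eNegN hP]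

theorem disj_inl (h : Conjunctive P X Y) (hX : PRK Γ X.opp) : PRK Γ P.opp := by
  cases h
  exacts [.iConjN1 hX, .iDisjP1 hX, .iNegN hX, .iNegP hX]

theorem disj_inr (h : Conjunctive P X Y) (hY : PRK Γ Y.opp) : PRK Γ P.opp := by
  cases h
  exacts [.iConjN2 hY, .iDisjP2 hY, .iNegN hY, .iNegP hY]

theorem disj_elim (h : Conjunctive P X Y) (hP : PRK Γ P.opp) (hX : PRK (insert X.opp Γ) Q)
    (hY : PRK (insert Y.opp Γ) Q) : PRK Γ Q := by
  cases h with
  | conj => exact .eConjN hP hX hY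
  | disj => exact .eDisjP hP hX hY
  -- A negation has no elimination by cases; its component is first doubled by `∨⁺` or `∧⁻`.
  | negP => exact .eDisjP (.iDisjP1 (.eNegN hP)) hX hY
  | negN => exact .eConjN (.iConjN1 (.eNegP hP)) hX hY

@[elab_as_elim]
theorem uniform_induction {motive : ∀ {Γ P}, PRK Γ P → Prop}
    (ax : ∀ {Γ P} (h : P ∈ Γ), motive (.ax h))
    (abs : ∀ {Γ P Q} (h : PRK Γ P) (h' : PRK Γ P.opp),
      motive h → motive h' → motive (h.absurd h' : PRK Γ Q))
    (conj_intro : ∀ {Γ P X Y} (hc : Conjunctive P X Y) (hX : PRK Γ X) (hY : PRK Γ Y),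
      motive hX → motive hY → motive (hX.conj_intro hc hY))
    (conj_left : ∀ {Γ P X Y} (hc : Conjunctive P X Y) (hP : PRK Γ P),
      motive hP → motive (hP.conj_left hc))
    (conj_right : ∀ {Γ P X Y} (hc : Conjunctive P X Y) (hP : PRK Γ P),
      motive hP → motive (hP.conj_right hc))
    (disj_inl : ∀ {Γ P X Y} (hc : Conjunctive P X Y) (hX : PRK Γ X.opp),
      motive hX → motive (hX.disj_inl hc))
    (disj_inr : ∀ {Γ P X Y} (hc : Conjunctive P X Y) (hY : PRK Γ Y.opp),
      motive hY → motive (hY.disj_inr hc))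
    (disj_elim : ∀ {Γ P X Y Q} (hc : Conjunctive P X Y) (hP : PRK Γ P.opp)
      (hX : PRK (insert X.opp Γ) Q) (hY : PRK (insert Y.opp Γ) Q),
      motive hP → motive hX → motive hY → motive (hP.disj_elim hc hX hY))
    (ic : ∀ {Γ} {P : MProp} (h : PRK (insert P.opp.classical Γ) P), motive h → motive h.ic)
    (ec : ∀ {Γ} {P : MProp} (h : PRK Γ P.classical) (h' : PRK Γ P.opp.classical),
      motive h → motive h' → motive (h.ec h'))
    {Γ : Finset MProp} {P : MProp} (h : PRK Γ P) : motive h := by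
  induction h with
  | ax hP => exact ax hP
  | abs _ h h' ih ih' => exact abs h h' ih ih'
  | iConjP hA hB ihA ihB => exact conj_intro (.conj _ _) hA hB ihA ihB
  | eConjP1 h ih => exact conj_left (.conj _ _) h ih
  | eConjP2 h ih => exact conj_right (.conj _ _) h ih
  | iDisjP1 h ih => exact disj_inl (.disj _ _) h ih
  | iDisjP2 h ih => exact disj_inr (.disj _ _) h ih
  | eDisjP h hA hB ih ihA ihB => exact disj_elim (.disj _ _) h hA hB ih ihA ihB
  | iNegP h ih => exact conj_intro (.negP _) h h ih ih
  | eNegP h ih => exact conj_left (.negP _) h ih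
  | icP h ih => exact ic (P := .sp _) h ih
  | ecP h h' ih ih' => exact ec (P := .sp _) h h' ih ih'
  | iDisjN hA hB ihA ihB => exact conj_intro (.disj _ _) hA hB ihA ihB
  | eDisjN1 h ih => exact conj_left (.disj _ _) h ih
  | eDisjN2 h ih => exact conj_right (.disj _ _) h ih
  | iConjN1 h ih => exact disj_inl (.conj _ _) h ih
  | iConjN2 h ih => exact disj_inr (.conj _ _) h ih
  | eConjN h hA hB ih ihA ihB => exact disj_elim (.conj _ _) h hA hB ih ihA ihB
  | iNegN h ih => exact conj_intro (.negN _) h h ih ih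
  | eNegN h ih => exact conj_left (.negN _) h ih
  | icN h ih => exact ic (P := .sn _) h ih
  | ecN h h' ih ih' => exact ec (P := .sn _) h h' ih ih'

theorem by_contradiction_of_isClassical (hX : X.isClassical) (h : PRK (insert X.opp Γ) X) :
    PRK Γ X := by
  cases X with
  | sp A | sn A => exact hX.elim
  | cp A => exact ic (P := .cp A) h
  | cn A => exact ic (P := .cn A) h

/-- The hypotheses on `Γ` are required over all `Δ' ⊇ Δ` so that they survive the rules that
extend the context; this way weakening and cut come out of a single induction. -/
theorem subst_of_forall_superset (h : PRK Γ P)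
    (hΔ : ∀ R ∈ Γ, ∀ Δ', Δ ⊆ Δ' → PRK Δ' R) : PRK Δ P := by
  have extend {Γ Δ : Finset MProp} (hΔ : ∀ R ∈ Γ, ∀ Δ', Δ ⊆ Δ' → PRK Δ' R) (Q : MProp) :
      ∀ R ∈ insert Q Γ, ∀ Δ', insert Q Δ ⊆ Δ' → PRK Δ' R := by
    intro R hR Δ' hΔ'
    obtain rfl | hR := Finset.mem_insert.1 hR
    · exact .ax (hΔ' (Finset.mem_insert_self _ _))
    · exact hΔ R hR Δ' ((Finset.subset_insert _ _).trans hΔ')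
  induction h using uniform_induction generalizing Δ with
  | ax hP => exact hΔ _ hP Δ subset_rfl
  | abs _ _ ih ih' => exact (ih hΔ).absurd (ih' hΔ)
  | conj_intro hc _ _ ihX ihY => exact conj_intro hc (ihX hΔ) (ihY hΔ)
  | conj_left hc _ ih => exact conj_left hc (ih hΔ)
  | conj_right hc _ ih => exact conj_right hc (ih hΔ)
  | disj_inl hc _ ih => exact disj_inl hc (ih hΔ)
  | disj_inr hc _ ih => exact disj_inr hc (ih hΔ)
  | disj_elim hc _ _ _ ih ihX ihY =>
    exact disj_elim hc (ih hΔ) (ihX (extend hΔ _)) (ihY (extend hΔ _))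
  | ic _ ih => exact (ih (extend hΔ _)).ic
  | ec _ _ ih ih' => exact (ih hΔ).ec (ih' hΔ)

theorem weaken (h : PRK Γ P) (hΓ : Γ ⊆ Δ) : PRK Δ P :=
  h.subst_of_forall_superset fun _ hR _ hΔ => .ax (hΔ (hΓ hR))

theorem subst (h : PRK Γ P) (hΔ : ∀ R ∈ Γ, PRK Δ R) : PRK Δ P :=
  h.subst_of_forall_superset fun R hR _ => (hΔ R hR).weaken

theorem cut (hP : PRK Γ P) (h : PRK (insert P Γ) Q) : PRK Γ Q :=
  h.subst <| Finset.forall_mem_insert _ _ _ |>.2 ⟨hP, fun _ => .ax⟩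

theorem replace (h : PRK (insert P Γ) R) (hP : PRK (insert Q Γ) P) : PRK (insert Q Γ) R :=
  hP.cut (h.weaken (Finset.insert_subset_insert _ (Finset.subset_insert _ _)))

protected theorem classical (h : PRK Γ P) : PRK Γ P.classical := by
  cases P with
  | sp A => exact .icP (h.weaken (Finset.subset_insert _ _))
  | sn A => exact .icN (h.weaken (Finset.subset_insert _ _))
  | cp A | cn A => exact h

end PRK

/-! ### Weakening strong atoms to classical ones -/

namespace MProp

/-- Replaces a strong atom `α⁺`, `α⁻` by the classical `α⊕`, `α⊖` and fixes everything else. -/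
def weakAtom : MProp → MProp
  | sp (.var a) => cp (.var a)
  | sn (.var a) => cn (.var a)
  | P => P

theorem weakAtom_opp (P : MProp) : P.opp.weakAtom = P.weakAtom.opp := by
  rcases P with A | A | A | A <;> cases A <;> rfl

theorem weakAtom_eq_self_or_eq_classical (P : MProp) :
    P.weakAtom = P ∨ P.weakAtom = P.classical := by
  rcases P with A | A | A | A <;> cases A <;> first | exact .inl rfl | exact .inr rfl

theorem weakAtom_classical (P : MProp) : P.classical.weakAtom = P.classical := by
  cases P <;> rfl

theorem Conjunctive.weakAtom {P X Y : MProp} (h : Conjunctive P X Y) :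
    Conjunctive P.weakAtom X.weakAtom Y.weakAtom := by
  cases h <;> constructor

end MProp

namespace PRK

variable {Γ : Finset MProp} {P X Y : MProp}

theorem weakAtom_right (h : PRK Γ P) : PRK Γ P.weakAtom := by
  obtain hP | hP := P.weakAtom_eq_self_or_eq_classical <;> rw [hP]
  exacts [h, h.classical]

theorem classical_of_weakAtom (h : PRK Γ P.weakAtom) : PRK Γ P.classical := by
  obtain hP | hP := P.weakAtom_eq_self_or_eq_classical <;> rw [hP] at h
  exacts [h.classical, h]

/-- No rule takes a strong atom apart, so strong atoms enter derivations only through (Abs), (IC)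
and (EC), and each of these remains admissible with classical atoms in their place. -/
theorem weakAtom (h : PRK Γ P) : PRK (Γ.image MProp.weakAtom) P.weakAtom := by
  induction h using uniform_induction with
  | ax hP => exact .ax (Finset.mem_image_of_mem _ hP)
  | abs _ _ ih ih' => exact ih.absurd (weakAtom_opp _ ▸ ih')
  | conj_intro hc _ _ ihX ihY => exact conj_intro hc.weakAtom ihX ihY
  | conj_left hc _ ih => exact conj_left hc.weakAtom ih
  | conj_right hc _ ih => exact conj_right hc.weakAtom ih
  | disj_inl hc _ ih =>
    rw [weakAtom_opp] at ih ⊢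
    exact disj_inl hc.weakAtom ih
  | disj_inr hc _ ih =>
    rw [weakAtom_opp] at ih ⊢
    exact disj_inr hc.weakAtom ih
  | disj_elim hc _ _ _ ih ihX ihY =>
    simp only [Finset.image_insert, weakAtom_opp] at ih ihX ihY
    exact disj_elim hc.weakAtom ih ihX ihY
  | ic _ ih =>
    rw [Finset.image_insert, weakAtom_classical, classical_opp] at ih
    rw [weakAtom_classical]
    exact by_contradiction_of_isClassical (isClassical_classical _) ih.classical_of_weakAtom
  | ec _ _ ih ih' =>
    rw [weakAtom_classical] at ih ih'
    exact ih.absurd (classical_opp _ ▸ ih')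

/-! ### Proof by contradiction from a strong hypothesis -/

theorem by_contradiction_of_weakAtom_eq (hP : P.weakAtom = P.classical)
    (h : PRK (insert P.opp Γ) P.classical) : PRK Γ P.classical := by
  refine by_contradiction_of_isClassical P.isClassical_classical ?_
  have h := h.weakAtom
  rw [Finset.image_insert, weakAtom_classical, weakAtom_opp, hP] at h
  refine h.subst <| Finset.forall_mem_insert _ _ _ |>.2 ⟨.ax (Finset.mem_insert_self _ _), ?_⟩
  refine Finset.forall_mem_image.2 fun R hR => ?_
  exact weakAtom_right (.ax (Finset.mem_insert_of_mem hR))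

theorem conj_by_contradiction (hc : Conjunctive P X Y) (hX : PRK (insert X.opp Γ) P.classical)
    (hY : PRK (insert Y.opp Γ) P.classical) : PRK Γ P := by
  refine conj_intro hc (by_contradiction_of_isClassical hc.isClassical.1 ?_)
    (by_contradiction_of_isClassical hc.isClassical.2 ?_)
  · have hP := (disj_inl hc (.ax (Finset.mem_insert_self X.opp Γ))).classical
    exact hX.absurd (P.classical_opp ▸ hP)
  · have hP := (disj_inr hc (.ax (Finset.mem_insert_self Y.opp Γ))).classical
    exact hY.absurd (P.classical_opp ▸ hP)

theorem conj_of_classical (hc : Conjunctive P X Y) (h : PRK Γ P.classical) : PRK Γ P :=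
  conj_by_contradiction hc (h.weaken (Finset.subset_insert _ _))
    (h.weaken (Finset.subset_insert _ _))

theorem by_contradiction (h : PRK (insert P.opp Γ) P.classical) : PRK Γ P.classical := by
  induction P using MProp.uniform_induction with
  | atomP a => exact by_contradiction_of_weakAtom_eq rfl h
  | atomN a => exact by_contradiction_of_weakAtom_eq rfl h
  | conj P X Y hc =>
    exact (conj_by_contradiction hc (h.replace (disj_inl hc (.ax (Finset.mem_insert_self _ _))))
      (h.replace (disj_inr hc (.ax (Finset.mem_insert_self _ _))))).classical
  | disj P X Y hc =>
    refine by_contradiction_of_isClassical P.opp.isClassical_classical ?_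
    rw [opp_opp] at h
    rw [← classical_opp, opp_opp]
    exact h.replace (conj_of_classical hc (.ax (Finset.mem_insert_self _ _)))
  | classical P =>
    have hP := P.isClassical_classical
    rw [classical_eq_self hP] at h ⊢
    exact by_contradiction_of_isClassical hP h

end PRK

/-! ### Derivability from infinite sets -/

namespace SDeriv

variable {T : Set MProp} {P Q R X Y : MProp}

theorem ax (h : P ∈ T) : SDeriv T P :=
  ⟨{P}, by simpa using h, .ax (Finset.mem_singleton_self P)⟩

theorem map (f : ∀ {Γ}, PRK Γ P → PRK Γ Q) : SDeriv T P → SDeriv T Q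
  | ⟨Δ, hΔ, h⟩ => ⟨Δ, hΔ, f h⟩

theorem map₂ (f : ∀ {Γ}, PRK Γ P → PRK Γ Q → PRK Γ R) : SDeriv T P → SDeriv T Q → SDeriv T R
  | ⟨Δ, hΔ, h⟩, ⟨Δ', hΔ', h'⟩ => ⟨Δ ∪ Δ', by simp [hΔ, hΔ'],
      f (h.weaken Finset.subset_union_left) (h'.weaken Finset.subset_union_right)⟩

theorem exists_insert (h : SDeriv (insert P T) Q) :
    ∃ Δ : Finset MProp, ↑Δ ⊆ T ∧ PRK (insert P Δ) Q := by
  obtain ⟨Δ, hΔ, h⟩ := h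
  refine ⟨Δ.erase P, ?_, h.weaken (Finset.insert_erase_subset P Δ)⟩
  simpa [Set.sdiff_subset_iff] using hΔ

theorem cut (hP : SDeriv T P) (h : SDeriv (insert P T) Q) : SDeriv T Q := by
  obtain ⟨Δ, hΔ, hP⟩ := hP
  obtain ⟨Δ', hΔ', h⟩ := h.exists_insert
  exact ⟨Δ ∪ Δ', by simp [hΔ, hΔ'], (hP.weaken Finset.subset_union_left).cut
    (h.weaken (Finset.insert_subset_insert _ Finset.subset_union_right))⟩

theorem disj_elim (hc : Conjunctive P X Y) (hP : SDeriv T P.opp)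
    (hX : SDeriv (insert X.opp T) Q) (hY : SDeriv (insert Y.opp T) Q) : SDeriv T Q := by
  obtain ⟨Δ, hΔ, hP⟩ := hP
  obtain ⟨ΔX, hΔX, hX⟩ := hX.exists_insert
  obtain ⟨ΔY, hΔY, hY⟩ := hY.exists_insert
  refine ⟨Δ ∪ (ΔX ∪ ΔY), by simp [hΔ, hΔX, hΔY], .disj_elim hc (hP.weaken ?_) (hX.weaken ?_)
    (hY.weaken ?_)⟩ <;> grind

theorem by_contradiction (h : SDeriv (insert P.opp T) P.classical) : SDeriv T P.classical := by
  obtain ⟨Δ, hΔ, h⟩ := h.exists_insert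
  exact ⟨Δ, hΔ, h.by_contradiction⟩

theorem exists_mem_of_sUnion {c : Set (Set MProp)} (hc : DirectedOn (· ⊆ ·) c)
    (hne : c.Nonempty) (h : SDeriv (⋃₀ c) P) : ∃ S ∈ c, SDeriv S P := by
  obtain ⟨Δ, hΔ, h⟩ := h
  obtain ⟨S, hS, hΔS⟩ :=
    hc.exists_mem_subset_of_finite_of_subset_sUnion hne Δ.finite_toSet hΔ
  exact ⟨S, hS, Δ, hΔS, h⟩

end SDeriv

/-! ### Prime theories -/

/-- A prime theory: a consistent, deductively closed set of moded propositions that contains an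
immediate reason for each strong disjunction, i.e. `(A ∨ B)⁺` or `(A ∧ B)⁻`, in it. The condition
on negations that the uniform notation adds already follows from closure. -/
structure PrimeTheory (T : Set MProp) : Prop where
  closed : ∀ P, SDeriv T P → P ∈ T
  consistent : SetConsistent T
  disj : ∀ P X Y, Conjunctive P X Y → P.opp ∈ T → X.opp ∈ T ∨ Y.opp ∈ T

theorem exists_maximal_not_sDeriv {Γ : Set MProp} {Q : MProp} (h : ¬ SDeriv Γ Q) :
    ∃ T, Γ ⊆ T ∧ Maximal (fun S => ¬ SDeriv S Q) T := by
  refine zorn_subset_nonempty {S | ¬ SDeriv S Q} (fun c hc hchain hne => ?_) Γ h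
  refine ⟨⋃₀ c, fun hQ => ?_, fun S => Set.subset_sUnion_of_mem⟩
  obtain ⟨S, hS, hSQ⟩ := hQ.exists_mem_of_sUnion hchain.directedOn hne
  exact hc hS hSQ

theorem PrimeTheory.of_maximal {T : Set MProp} {Q : MProp}
    (hT : Maximal (fun S => ¬ SDeriv S Q) T) : PrimeTheory T := by
  have sDeriv_insert {P} (hP : P ∉ T) : SDeriv (insert P T) Q :=
    not_not.1 (hT.not_prop_of_ssuperset (Set.ssubset_insert hP))
  refine ⟨fun P hP => ?_, ⟨Q, hT.prop⟩, fun P X Y hc hP => ?_⟩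
  · by_contra hPT
    exact hT.prop (hP.cut (sDeriv_insert hPT))
  · by_contra! hXY
    exact hT.prop (.disj_elim hc (.ax hP) (sDeriv_insert hXY.1) (sDeriv_insert hXY.2))

theorem exists_primeTheory {Γ : Set MProp} {Q : MProp} (h : ¬ SDeriv Γ Q) :
    ∃ T, PrimeTheory T ∧ Γ ⊆ T ∧ Q ∉ T := by
  obtain ⟨T, hΓT, hT⟩ := exists_maximal_not_sDeriv h
  exact ⟨T, .of_maximal hT, hΓT, fun hQ => hT.prop (.ax hQ)⟩

namespace PrimeTheory

variable {T : Set MProp} {P X Y : MProp}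

theorem opp_notMem (hT : PrimeTheory T) (hP : P ∈ T) : P.opp ∉ T := by
  intro hP'
  obtain ⟨Q, hQ⟩ := hT.consistent
  exact hQ (.map₂ .absurd (.ax hP) (.ax hP'))

theorem classical_mem (hT : PrimeTheory T) (hP : P ∈ T) : P.classical ∈ T :=
  hT.closed _ (.map .classical (.ax hP))

theorem mem_iff_of_conjunctive (hT : PrimeTheory T) (hc : Conjunctive P X Y) :
    P ∈ T ↔ X ∈ T ∧ Y ∈ T where
  mp hP := ⟨hT.closed _ (.map (.conj_left hc) (.ax hP)),
    hT.closed _ (.map (.conj_right hc) (.ax hP))⟩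
  mpr hXY := hT.closed _ (.map₂ (.conj_intro hc) (.ax hXY.1) (.ax hXY.2))

theorem opp_mem_iff_of_conjunctive (hT : PrimeTheory T) (hc : Conjunctive P X Y) :
    P.opp ∈ T ↔ X.opp ∈ T ∨ Y.opp ∈ T where
  mp := hT.disj P X Y hc
  mpr
    | .inl hX => hT.closed _ (.map (.disj_inl hc) (.ax hX))
    | .inr hY => hT.closed _ (.map (.disj_inr hc) (.ax hY))

theorem exists_superset_opp_mem (hT : PrimeTheory T) (hP : P.classical ∉ T) :
    ∃ T', PrimeTheory T' ∧ T ⊆ T' ∧ P.opp ∈ T' := by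
  have hP' : ¬ SDeriv (insert P.opp T) P.classical :=
    fun h => hP (hT.closed _ h.by_contradiction)
  obtain ⟨T', hT', hTT', -⟩ := exists_primeTheory hP'
  obtain ⟨hopp, hsub⟩ := Set.insert_subset_iff.1 hTT'
  exact ⟨T', hT', hsub, hopp⟩

theorem classical_mem_iff (hT : PrimeTheory T) :
    P.classical ∈ T ↔ ∀ T', PrimeTheory T' → T ⊆ T' → P.opp ∉ T' := by
  refine ⟨fun hP T' hT' hTT' hopp => ?_, fun h => ?_⟩
  · exact hT'.opp_notMem (hTT' hP) (P.classical_opp ▸ hT'.classical_mem hopp)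
  · by_contra hP
    obtain ⟨T', hT', hTT', hopp⟩ := hT.exists_superset_opp_mem hP
    exact h T' hT' hTT' hopp

theorem exists_superset_xor_mem (hT : PrimeTheory T) (P : MProp) :
    ∃ T', PrimeTheory T' ∧ T ⊆ T' ∧ Xor (P ∈ T') (P.opp ∈ T') := by
  by_cases hP : P.classical ∈ T
  · have hP' : P.opp.classical ∉ T := P.classical_opp ▸ hT.opp_notMem hP
    obtain ⟨T', hT', hTT', hmem⟩ := hT.exists_superset_opp_mem hP'
    rw [opp_opp] at hmem
    exact ⟨T', hT', hTT', .inl ⟨hmem, hT'.opp_notMem hmem⟩⟩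
  · obtain ⟨T', hT', hTT', hopp⟩ := hT.exists_superset_opp_mem hP
    exact ⟨T', hT', hTT', .inr ⟨hopp, fun hmem => hT'.opp_notMem hmem hopp⟩⟩

end PrimeTheory

/-! ### The canonical model -/

section Forces

variable {W : Type} {M : KripkeModel W} {w : W} {P X Y : MProp}

theorem forces_iff_of_conjunctive (hc : Conjunctive P X Y) :
    Forces M w P ↔ Forces M w X ∧ Forces M w Y := by
  cases hc <;> simp only [Forces, and_self]

theorem forces_opp_iff_of_conjunctive (hc : Conjunctive P X Y) :
    Forces M w P.opp ↔ Forces M w X.opp ∨ Forces M w Y.opp := by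
  cases hc <;> simp only [opp, Forces, or_self]

theorem forces_classical_iff (hP : P.isStrong) :
    Forces M w P.classical ↔ ∀ w', M.le w w' → ¬ Forces M w' P.opp := by
  cases P with
  | sp A | sn A => simp only [classical, opp, Forces]
  | cp A | cn A => exact hP.elim

end Forces

/-- The canonical model: worlds are the prime theories ordered by inclusion, and a world verifies
or falsifies the atoms `α` for which it contains `α⁺` or `α⁻`. -/
def canonicalModel : KripkeModel {T : Set MProp // PrimeTheory T} where
  le T T' := T.1 ⊆ T'.1
  le_refl _ := subset_rfl
  le_trans := Set.Subset.trans
  le_antisymm h h' := Subtype.ext (h.antisymm h')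
  Vp T a := .sp (.var a) ∈ T.1
  Vn T a := .sn (.var a) ∈ T.1
  monoP h _ ha := h ha
  monoN h _ ha := h ha
  stab T a := by
    obtain ⟨T', hT', hTT', hxor⟩ := T.2.exists_superset_xor_mem (.sp (.var a))
    exact ⟨⟨T', hT'⟩, hTT', hxor⟩

theorem canonicalModel_forces_iff (P : MProp) (T : {T : Set MProp // PrimeTheory T}) :
    Forces canonicalModel T P ↔ P ∈ T.1 := by
  induction P using MProp.uniform_induction generalizing T with
  | atomP a => rw [Forces]; rfl
  | atomN a => rw [Forces]; rfl
  | conj P X Y hc ihX ihY =>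
    rw [forces_iff_of_conjunctive hc, T.2.mem_iff_of_conjunctive hc, ihX, ihY]
  | disj P X Y hc ihX ihY =>
    rw [forces_opp_iff_of_conjunctive hc, T.2.opp_mem_iff_of_conjunctive hc, ihX, ihY]
  | classical P hP ih =>
    simp only [forces_classical_iff hP, T.2.classical_mem_iff, ih, Subtype.forall]
    rfl

/-- Completeness of PRK with respect to Kripke semantics. -/
theorem prk_completeness (Γ : Set MProp) (P : MProp)
    (h : ∀ (W : Type) (M : KripkeModel W) (w : W),
      (∀ Q ∈ Γ, Forces M w Q) → Forces M w P) :
    SDeriv Γ P := by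
  by_contra hP
  obtain ⟨T, hT, hΓT, hPT⟩ := exists_primeTheory hP
  have hΓ : ∀ Q ∈ Γ, Forces canonicalModel ⟨T, hT⟩ Q :=
    fun Q hQ => (canonicalModel_forces_iff Q ⟨T, hT⟩).2 (hΓT hQ)
  exact hPT ((canonicalModel_forces_iff P ⟨T, hT⟩).1 (h _ canonicalModel ⟨T, hT⟩ hΓ))
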